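/- arXiv:1404.7056 — 4 statements merged into one kernel-verified Lean document; each statement's English description precedes it below -/
import Mathlib

section
/- Suppose that χ_B ∈ X and χ_B has absolutely continuous quasi-norm in X for every bounded set B ⊆ P. Then for every measurable function u : P → ℝ ∪ {±∞} one has ‖u‖_X = inf{‖v‖_X : v ≥ |u| everywhere on P and v is lower semicontinuous on P}. -/
/-!
Only the bound `⨅ v, ‖v‖ ≤ ‖u‖` with `‖u‖ < ∞` needs an argument. By continuity of the quasi-norm
it suffices to find, for every `δ > 0`, a lower semicontinuous `v ≥ |u|` with `‖v - |u|‖ ≤ δ`; this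
is well defined almost everywhere since a function of finite quasi-norm is finite a.e.

The property that `w` has such majorants is `QBFL.LscApprox`. It is stable under countable sums, by the
Riesz–Fischer property (`QBFL.LscApprox.tsum`), and it holds for `c • χ_A` with `A` measurable and
bounded: outer regularity gives open sets `V n ⊇ A` inside a fixed ball, decreasing to `A` up to a
null set, and absolute continuity of the quasi-norm of the characteristic function of the ball makes
`‖χ_{V n \ A}‖` tend to `0` (`QBFL.exists_open_superset`). Every nonnegative measurable function is
a countable sum of functions `c • χ_A`, so it has the property too (`QBFL.LscApprox.of_measurable`).
-/

open MeasureTheory Filter Set Topology Metric ENNReal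

noncomputable section

/-- A (non-constant, rectifiable) curve in `P`, parametrized by arc length. -/
structure Curve (P : Type*) [PseudoMetricSpace P] where
  len : ℝ
  len_pos : 0 < len
  toFun : ℝ → P
  lip : LipschitzOnWith 1 toFun (Set.Icc 0 len)

variable {P : Type*}

/-- The curve integral `∫_γ ρ ds`. -/
def curveLint [PseudoMetricSpace P] (γ : Curve P) (ρ : P → ℝ≥0∞) : ℝ≥0∞ :=
  ∫⁻ t in Set.Icc (0 : ℝ) γ.len, ρ (γ.toFun t)

/-- `g` is an upper gradient of `u`. -/
def IsUpperGradient [PseudoMetricSpace P] [MeasurableSpace P]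
    (u : P → EReal) (g : P → ℝ≥0∞) : Prop :=
  Measurable g ∧
    ∀ γ : Curve P, (u (γ.toFun 0) - u (γ.toFun γ.len)).abs ≤ curveLint γ g

/-- A quasi-Banach function lattice over `(P, μ)` with continuous quasi-norm. -/
structure QBFL (P : Type*) [MeasurableSpace P] (μ : MeasureTheory.Measure P) where
  nrm : (P → EReal) → ℝ≥0∞
  cc : ℝ≥0∞
  one_le_cc : 1 ≤ cc
  cc_lt_top : cc < ⊤
  nrm_eq_zero_iff : ∀ u : P → EReal, Measurable u → (nrm u = 0 ↔ u =ᵐ[μ] 0)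
  nrm_smul : ∀ (a : ℝ) (u : P → EReal),
    nrm (fun x => (a : EReal) * u x) = ENNReal.ofReal |a| * nrm u
  nrm_triangle : ∀ u v : P → EReal,
    nrm (fun x => u x + v x) ≤ cc * (nrm u + nrm v)
  nrm_mono : ∀ u v : P → EReal, (∀ᵐ x ∂μ, (u x).abs ≤ (v x).abs) → nrm u ≤ nrm v
  nrm_rieszFischer : ∀ f : ℕ → P → EReal, (∀ n, ∀ᵐ x ∂μ, 0 ≤ f n x) →
    nrm (fun x => ∑' n, f n x) ≤ ∑' n, cc ^ (n + 1) * nrm (f n)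
  nrm_continuous : ∀ (f : ℕ → P → EReal) (u : P → EReal),
    Tendsto (fun n => nrm fun x => f n x - u x) atTop (𝓝 0) →
    Tendsto (fun n => nrm (f n)) atTop (𝓝 (nrm u))

variable [MetricSpace P] [MeasurableSpace P] {μ : MeasureTheory.Measure P}

/-- The quasi-norm applied to a `ℝ≥0∞`-valued function. -/
def QBFL.nrmE (X : QBFL P μ) (g : P → ℝ≥0∞) : ℝ≥0∞ :=
  X.nrm fun x => (g x : EReal)

/-- The Newtonian quasi-seminorm `‖u‖_{N¹X}`. -/
def QBFL.newt (X : QBFL P μ) (u : P → EReal) : ℝ≥0∞ :=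
  X.nrm u + ⨅ g ∈ {g : P → ℝ≥0∞ | IsUpperGradient u g}, X.nrmE g

/-- Membership in the Newtonian space `N¹X`. -/
def QBFL.memN1 (X : QBFL P μ) (u : P → EReal) : Prop :=
  Measurable u ∧ X.newt u < ⊤

/-- The Sobolev capacity `C_X`. -/
def QBFL.cap (X : QBFL P μ) (E : Set P) : ℝ≥0∞ :=
  ⨅ u ∈ {u : P → EReal | X.memN1 u ∧ ∀ x ∈ E, 1 ≤ u x}, X.newt u


set_option linter.unusedSectionVars false

theorem EReal.abs_coe_ennreal_eq (a : ℝ≥0∞) : ((a : EReal)).abs = a := by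
  induction a using ENNReal.recTopCoe with
  | top => rfl
  | coe r =>
    change (((r : ℝ) : EReal)).abs = r
    rw [EReal.abs_def, NNReal.abs_eq, ENNReal.ofReal_coe_nnreal]

theorem EReal.abs_eq_of_nonneg {a : EReal} (ha : 0 ≤ a) : (a.abs : EReal) = a := by
  lift a to ℝ≥0∞ using ha
  rw [EReal.abs_coe_ennreal_eq]

theorem EReal.coe_ennreal_tsum_eq (f : ℕ → ℝ≥0∞) :
    ((∑' n, f n : ℝ≥0∞) : EReal) = ∑' n, (f n : EReal) :=
  Summable.map_tsum ENNReal.summable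
    (⟨⟨((↑) : ℝ≥0∞ → EReal), rfl⟩, EReal.coe_ennreal_add⟩ : ℝ≥0∞ →+ EReal)
    continuous_coe_ennreal_ereal

theorem EReal.measurable_abs : Measurable EReal.abs := by
  have h : EReal.abs = fun a : EReal => max a.toENNReal (-a).toENNReal := by
    funext a
    induction a with
    | bot => simp
    | top => simp
    | coe r =>
      rw [EReal.abs_def, ← EReal.coe_neg, EReal.toENNReal_of_ne_top (EReal.coe_ne_top _),
        EReal.toENNReal_of_ne_top (EReal.coe_ne_top _), EReal.toReal_coe, EReal.toReal_coe,
        ← ENNReal.ofReal_max]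
      rfl
  rw [h]
  fun_prop

namespace QBFL

theorem nrmE_mono (X : QBFL P μ) {f g : P → ℝ≥0∞} (h : ∀ᵐ x ∂μ, f x ≤ g x) :
    X.nrmE f ≤ X.nrmE g :=
  X.nrm_mono _ _ <| h.mono fun x hx => by
    simpa only [EReal.abs_coe_ennreal_eq] using hx

theorem nrmE_add_le (X : QBFL P μ) (f g : P → ℝ≥0∞) :
    X.nrmE (fun x => f x + g x) ≤ X.cc * (X.nrmE f + X.nrmE g) := by
  simpa only [nrmE, EReal.coe_ennreal_add] using
    X.nrm_triangle (fun x => (f x : EReal)) (fun x => (g x : EReal))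

theorem nrmE_const_mul (X : QBFL P μ) (c : NNReal) (f : P → ℝ≥0∞) :
    X.nrmE (fun x => c * f x) = c * X.nrmE f := by
  have h := X.nrm_smul (c : ℝ) (fun x => (f x : EReal))
  rw [NNReal.abs_eq, ENNReal.ofReal_coe_nnreal] at h
  simp only [nrmE, EReal.coe_ennreal_mul]
  exact h

theorem nrmE_tsum_le (X : QBFL P μ) (f : ℕ → P → ℝ≥0∞) :
    X.nrmE (fun x => ∑' n, f n x) ≤ ∑' n, X.cc ^ (n + 1) * X.nrmE (f n) := by
  simpa only [nrmE, EReal.coe_ennreal_tsum_eq] using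
    X.nrm_rieszFischer (fun n x => (f n x : EReal))
      fun n => Eventually.of_forall fun x => EReal.coe_ennreal_nonneg _

/-- On the set where `w = ∞`, doubling `w` does not change it, so the quasi-norm of `w` restricted
to this set equals twice itself; being finite, it vanishes. -/
theorem ae_lt_top_of_nrmE_lt_top (X : QBFL P μ) {w : P → ℝ≥0∞} (hw : Measurable w)
    (hfin : X.nrmE w < ⊤) : ∀ᵐ x ∂μ, w x < ⊤ := by
  set A : Set P := {x | w x = ⊤} with hA
  have hAm : MeasurableSet A := hw (measurableSet_singleton ⊤)
  set f : P → ℝ≥0∞ := A.indicator fun _ => ⊤ with hf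
  have hfm : Measurable f := measurable_const.indicator hAm
  have hfle : X.nrmE f ≤ X.nrmE w := X.nrmE_mono <| Eventually.of_forall fun x => by
    by_cases hx : x ∈ A
    · simp [hf, hx, show w x = ⊤ from hx]
    · simp [hf, hx]
  have hdouble : X.nrmE f = 2 * X.nrmE f := by
    have h := X.nrmE_const_mul 2 f
    have h2 : (fun x => ((2 : NNReal) : ℝ≥0∞) * f x) = f := by
      funext x
      by_cases hx : x ∈ A <;> simp [hf, hx]
    rw [h2] at h
    simpa using h
  have hzero : X.nrmE f = 0 := by
    by_contra hne
    have : X.nrmE f < 2 * X.nrmE f := by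
      rw [two_mul]
      exact ENNReal.lt_add_right (hfle.trans_lt hfin).ne hne
    exact this.ne hdouble
  have hae := (X.nrm_eq_zero_iff _ (measurable_coe_ennreal_ereal.comp hfm)).1 hzero
  filter_upwards [hae] with x hx
  rw [lt_top_iff_ne_top]
  intro hxt
  simp [hf, show x ∈ A from hxt] at hx

/-- `w` has lower semicontinuous majorants `v` whose excess over `w` has arbitrarily small
quasi-norm. The excess is bounded by a function `g` in place of `v - w`, which avoids subtraction
where `w = ∞`. -/
def LscApprox (X : QBFL P μ) (w : P → ℝ≥0∞) : Prop :=
  ∀ δ : ℝ≥0∞, 0 < δ → ∃ v g : P → ℝ≥0∞, LowerSemicontinuous v ∧ (∀ x, w x ≤ v x) ∧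
    (∀ x, v x ≤ w x + g x) ∧ X.nrmE g ≤ δ

theorem LscApprox.tsum {X : QBFL P μ} {w : ℕ → P → ℝ≥0∞} (h : ∀ n, X.LscApprox (w n)) :
    X.LscApprox (fun x => ∑' n, w n x) := by
  intro δ hδ
  obtain ⟨ε, hε, hsum⟩ := ENNReal.exists_pos_tsum_mul_lt_of_countable hδ.ne'
    (fun n : ℕ => X.cc ^ (n + 1)) (fun n => ENNReal.pow_ne_top X.cc_lt_top.ne)
  choose v g hv hwv hvg hg using fun n => h n (ε n) (by exact_mod_cast hε n)
  refine ⟨fun x => ∑' n, v n x, fun x => ∑' n, g n x, lowerSemicontinuous_tsum hv,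
    fun x => ENNReal.tsum_le_tsum fun n => hwv n x, fun x => ?_, ?_⟩
  · rw [← ENNReal.tsum_add]
    exact ENNReal.tsum_le_tsum fun n => hvg n x
  · refine (X.nrmE_tsum_le g).trans (le_trans ?_ hsum.le)
    exact ENNReal.tsum_le_tsum fun n => by gcongr; exact hg n

theorem LscApprox.add {X : QBFL P μ} {w₁ w₂ : P → ℝ≥0∞} (h₁ : X.LscApprox w₁)
    (h₂ : X.LscApprox w₂) : X.LscApprox (fun x => w₁ x + w₂ x) := by
  intro δ hδ
  have hcc0 : X.cc ≠ 0 := (zero_lt_one.trans_le X.one_le_cc).ne'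
  have hε : 0 < δ / X.cc / 2 :=
    ENNReal.div_pos (ENNReal.div_pos hδ.ne' X.cc_lt_top.ne).ne' ENNReal.ofNat_ne_top
  obtain ⟨v₁, g₁, hv₁, hwv₁, hvg₁, hg₁⟩ := h₁ _ hε
  obtain ⟨v₂, g₂, hv₂, hwv₂, hvg₂, hg₂⟩ := h₂ _ hε
  refine ⟨fun x => v₁ x + v₂ x, fun x => g₁ x + g₂ x, hv₁.add hv₂,
    fun x => add_le_add (hwv₁ x) (hwv₂ x), fun x => ?_, ?_⟩
  · exact (add_le_add (hvg₁ x) (hvg₂ x)).trans (add_add_add_comm _ _ _ _).le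
  · calc X.nrmE (fun x => g₁ x + g₂ x) ≤ X.cc * (X.nrmE g₁ + X.nrmE g₂) := X.nrmE_add_le _ _
      _ ≤ X.cc * (δ / X.cc / 2 + δ / X.cc / 2) := by gcongr
      _ = δ := by rw [ENNReal.add_halves, ENNReal.mul_div_cancel hcc0 X.cc_lt_top.ne]

/-- Outer regularity in the quasi-norm, for measurable subsets of a ball. -/
theorem exists_open_superset [BorelSpace P] (X : QBFL P μ) {p : P} {r : ℝ}
    (hfin : μ (ball p r) < ⊤)
    (hac : ∀ E : ℕ → Set P, (∀ n, MeasurableSet (E n)) → Antitone E → μ (⋂ n, E n) = 0 →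
      Tendsto (fun n => X.nrm ((E n).indicator ((ball p r).indicator 1))) atTop (𝓝 0))
    {A : Set P} (hA : MeasurableSet A) (hAB : A ⊆ ball p r) {δ : ℝ≥0∞} (hδ : 0 < δ) :
    ∃ V : Set P, IsOpen V ∧ A ⊆ V ∧ X.nrmE ((V \ A).indicator 1) ≤ δ := by
  set B := ball p r with hB
  -- The restriction of `μ` to the ball is a finite measure, hence outer regular.
  have : IsFiniteMeasure (μ.restrict B) := ⟨by simpa using hfin⟩
  have hU : ∀ n : ℕ, ∃ U, U ⊇ A ∧ IsOpen U ∧ (μ.restrict B) (U \ A) < ((n : ℝ≥0∞) + 1)⁻¹ := by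
    intro n
    obtain ⟨U, h1, h2, -, h3⟩ := hA.exists_isOpen_sdiff_lt (μ := μ.restrict B)
      (measure_ne_top _ _) (ε := ((n : ℝ≥0∞) + 1)⁻¹) (by simp)
    exact ⟨U, h1, h2, h3⟩
  choose U hAU hUo hUlt using hU
  set V : ℕ → Set P := fun n => B ∩ ⋂ k ∈ Finset.range (n + 1), U k with hV
  have hVo : ∀ n, IsOpen (V n) := fun n =>
    isOpen_ball.inter (isOpen_biInter_finset fun k _ => hUo k)
  have hAV : ∀ n, A ⊆ V n := fun n =>
    subset_inter hAB (subset_iInter₂ fun k _ => hAU k)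
  have hVU : ∀ n, V n ⊆ B ∩ U n := fun n =>
    inter_subset_inter_right _ (biInter_subset_of_mem (by simp))
  have hanti : Antitone fun n => V n \ A := by
    intro m n hmn
    refine sdiff_subset_sdiff_left (inter_subset_inter_right _ ?_)
    refine biInter_subset_biInter_left fun k hk => ?_
    simp only [Finset.mem_coe, Finset.mem_range] at hk ⊢
    omega
  have hnull : μ (⋂ n, V n \ A) = 0 := by
    have hle : ∀ n : ℕ, μ (⋂ n, V n \ A) ≤ ((n : ℝ≥0∞) + 1)⁻¹ := by
      intro n
      refine le_trans ?_ (hUlt n).le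
      rw [Measure.restrict_apply ((hUo n).measurableSet.diff hA)]
      refine measure_mono ((iInter_subset _ n).trans fun x hx => ?_)
      exact ⟨⟨(hVU n hx.1).2, hx.2⟩, (hVU n hx.1).1⟩
    have hlim : Tendsto (fun n : ℕ => ((n : ℝ≥0∞) + 1)⁻¹) atTop (𝓝 0) := by
      have := (tendsto_add_atTop_iff_nat 1).2 ENNReal.tendsto_inv_nat_nhds_zero
      simpa using this
    exact le_antisymm (ge_of_tendsto' hlim hle) zero_le
  have ht := hac (fun n => V n \ A) (fun n => (hVo n).measurableSet.diff hA) hanti hnull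
  obtain ⟨n, hn⟩ := (ht.eventually (gt_mem_nhds hδ)).exists
  refine ⟨V n, hVo n, hAV n, le_trans (le_of_eq ?_) hn.le⟩
  unfold nrmE
  congr 1
  funext x
  by_cases hx : x ∈ V n \ A
  · have hxB : x ∈ B := hx.1.1
    simp [indicator_of_mem hx, hxB]
  · simp [indicator_of_notMem hx]

/-- The hypothesis of the theorem in the form in which it is used: the measure of each ball is
finite and its characteristic function has absolutely continuous quasi-norm. -/
def BallAC (X : QBFL P μ) : Prop :=
  ∀ (p : P) (r : ℝ), 0 < r → μ (ball p r) < ⊤ ∧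
    ∀ E : ℕ → Set P, (∀ n, MeasurableSet (E n)) → Antitone E → μ (⋂ n, E n) = 0 →
      Tendsto (fun n => X.nrm ((E n).indicator ((ball p r).indicator 1))) atTop (𝓝 0)

theorem LscApprox.indicator_of_subset_ball [BorelSpace P] {X : QBFL P μ} (hX : X.BallAC)
    (c : NNReal) {p : P} {r : ℝ} (hr : 0 < r) {A : Set P} (hA : MeasurableSet A)
    (hAB : A ⊆ ball p r) : X.LscApprox (A.indicator fun _ => (c : ℝ≥0∞)) := by
  intro δ hδ
  -- The tolerance `δ / c` is `∞` when `c = 0`.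
  obtain ⟨V, hVo, hAV, hV⟩ := X.exists_open_superset (hX p r hr).1 (hX p r hr).2 hA hAB
    (ENNReal.div_pos hδ.ne' (ENNReal.coe_ne_top (r := c)))
  refine ⟨V.indicator fun _ => (c : ℝ≥0∞), fun x => c * (V \ A).indicator 1 x,
    hVo.lowerSemicontinuous_indicator zero_le,
    fun x => indicator_le_indicator_of_subset hAV (fun _ => zero_le) x, fun x => ?_, ?_⟩
  · by_cases hxV : x ∈ V
    · by_cases hxA : x ∈ A <;> simp [hxV, hxA]
    · simp [hxV]
  · rw [X.nrmE_const_mul]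
    exact (mul_le_mul_right hV _).trans ENNReal.mul_div_le

theorem LscApprox.indicator [BorelSpace P] {X : QBFL P μ} (hX : X.BallAC)
    (c : NNReal) {A : Set P} (hA : MeasurableSet A) :
    X.LscApprox (A.indicator fun _ => (c : ℝ≥0∞)) := by
  rcases isEmpty_or_nonempty P with hP | ⟨⟨p⟩⟩
  · have h0 : X.nrmE 0 = 0 :=
      (X.nrm_eq_zero_iff _ (by fun_prop)).2 (Eventually.of_forall fun x => hP.elim x)
    exact fun δ _ => ⟨0, 0, lowerSemicontinuous_const, fun x => hP.elim x, fun x => hP.elim x,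
      h0.trans_le zero_le⟩
  -- Split `A` into the bounded pieces lying in successive differences of balls around `p`.
  set D : ℕ → Set P := disjointed fun n : ℕ => ball p ((n : ℝ) + 1) with hD
  have hDsub : ∀ n, D n ⊆ ball p ((n : ℝ) + 1) := disjointed_subset _
  have hDm : ∀ n, MeasurableSet (D n) := MeasurableSet.disjointed fun n => measurableSet_ball
  have hDdisj : Pairwise (Function.onFun Disjoint fun n => A ∩ D n) := fun m n hmn =>
    (disjoint_disjointed _ hmn).mono inter_subset_right inter_subset_right
  have hDU : ⋃ n, A ∩ D n = A := by
    rw [← inter_iUnion, hD, iUnion_disjointed]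
    refine inter_eq_left.2 fun x _ => mem_iUnion.2 ?_
    obtain ⟨n, hn⟩ := exists_nat_gt (dist x p)
    exact ⟨n, mem_ball.2 (hn.trans (lt_add_one _))⟩
  have h := LscApprox.tsum (X := X) fun n : ℕ =>
    LscApprox.indicator_of_subset_ball hX c (p := p) (r := (n : ℝ) + 1) (by positivity)
      (hA.inter (hDm n)) (inter_subset_right.trans (hDsub n))
  convert h using 1
  funext x
  by_cases hx : x ∈ A
  · obtain ⟨n, hn⟩ := mem_iUnion.1 (hDU.symm ▸ hx : x ∈ ⋃ n, A ∩ D n)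
    rw [tsum_eq_single n fun m hm => indicator_of_notMem
      (fun hxm => (hDdisj hm).le_bot ⟨hxm, hn⟩) _]
    simp [hx, hn.2]
  · simp [hx]

theorem LscApprox.of_measurable [BorelSpace P] {X : QBFL P μ} (hX : X.BallAC)
    {w : P → ℝ≥0∞} (hw : Measurable w) : X.LscApprox w := by
  have hsimple : ∀ f : SimpleFunc P NNReal, X.LscApprox fun x => (f x : ℝ≥0∞) := by
    intro f
    induction f using SimpleFunc.induction with
    | @const c s hs =>
      convert LscApprox.indicator hX c hs using 1
      funext x
      by_cases hx : x ∈ s <;> simp [SimpleFunc.piecewise_apply, hx]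
    | add _ hf hg =>
      simpa using hf.add hg
  have h := LscApprox.tsum fun n => hsimple (SimpleFunc.eapproxDiff w n)
  simpa only [SimpleFunc.tsum_eapproxDiff w hw] using h

end QBFL

/-- Vitali–Carathéodory theorem. If `χ_B ∈ X` and `χ_B` has absolutely
continuous quasi-norm in `X` for every bounded set `B ⊆ P`, then the quasi-norm of any
measurable function `u` equals the infimum of the quasi-norms of its lower semicontinuous
majorants. -/
theorem vitali_caratheodory
    {P : Type*} [MetricSpace P] [MeasurableSpace P] [BorelSpace P]
    (μ : MeasureTheory.Measure P) [SigmaFinite μ]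
    (hball : ∀ (x : P) (r : ℝ), 0 < r → 0 < μ (Metric.ball x r) ∧ μ (Metric.ball x r) < ⊤)
    (X : QBFL P μ)
    (hX : ∀ B : Set P, Bornology.IsBounded B →
      X.nrm (B.indicator 1) < ⊤ ∧
      ∀ E : ℕ → Set P, (∀ n, MeasurableSet (E n)) → Antitone E → μ (⋂ n, E n) = 0 →
        Tendsto (fun n => X.nrm ((E n).indicator (B.indicator 1))) atTop (𝓝 0))
    (u : P → EReal) (hu : Measurable u) :
    X.nrm u =
      ⨅ v ∈ {v : P → EReal | (∀ x, ((u x).abs : EReal) ≤ v x) ∧ LowerSemicontinuous v},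
        X.nrm v := by
  apply le_antisymm
  · refine le_iInf₂ fun v hv => X.nrm_mono _ _ (Eventually.of_forall fun x => ?_)
    have h0 : 0 ≤ v x := (EReal.coe_ennreal_nonneg _).trans (hv.1 x)
    rw [← EReal.coe_ennreal_le_coe_ennreal_iff, EReal.abs_eq_of_nonneg h0]
    exact hv.1 x
  rcases eq_top_or_lt_top (X.nrm u) with htop | hfin
  · rw [htop]
    exact le_top
  have hballAC : X.BallAC := fun p r hr => ⟨(hball p r hr).2, (hX _ isBounded_ball).2⟩
  set w : P → ℝ≥0∞ := fun x => (u x).abs with hw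
  have hwm : Measurable w := EReal.measurable_abs.comp hu
  have hwu : X.nrmE w = X.nrm u := by
    apply le_antisymm <;>
      exact X.nrm_mono _ _ (Eventually.of_forall fun x => by simp [hw, EReal.abs_coe_ennreal_eq])
  have hwfin := X.ae_lt_top_of_nrmE_lt_top hwm (hwu ▸ hfin)
  choose v g hv hwv hvg hg using fun n : ℕ =>
    QBFL.LscApprox.of_measurable hballAC hwm (n : ℝ≥0∞)⁻¹ (by simp)
  have hdiff : ∀ n, X.nrm (fun x => (v n x : EReal) - (w x : EReal)) ≤ (n : ℝ≥0∞)⁻¹ := by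
    intro n
    refine (X.nrm_mono _ (fun x => (g n x : EReal)) ?_).trans (hg n)
    filter_upwards [hwfin] with x hx
    -- Since `w x` is finite, the difference equals the truncated one.
    have hsub : (v n x : EReal) - (w x : EReal) = ((v n x - w x : ℝ≥0∞) : EReal) :=
      (ENNReal.toEReal_sub hx.ne (hwv n x)).symm
    rw [hsub, EReal.abs_coe_ennreal_eq, EReal.abs_coe_ennreal_eq]
    exact tsub_le_iff_left.2 (hvg n x)
  have hlim : Tendsto (fun n => X.nrm fun x => (v n x : EReal)) atTop (𝓝 (X.nrmE w)) :=
    X.nrm_continuous _ _ (tendsto_of_tendsto_of_tendsto_of_le_of_le tendsto_const_nhds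
      ENNReal.tendsto_inv_nat_nhds_zero (fun _ => zero_le) hdiff)
  rw [← hwu]
  refine ge_of_tendsto' hlim fun n => iInf₂_le _ ⟨fun x => ?_, ?_⟩
  · exact EReal.coe_ennreal_le_coe_ennreal_iff.2 (hwv n x)
  · exact continuous_coe_ennreal_ereal.comp_lowerSemicontinuous (hv n)
      EReal.coe_ennreal_strictMono.monotone

end
end

section
/- Let G ⊆ P be open and let E ⊆ P satisfy μ(E) = 0. Then C_X(G) = C_X(G ∖ E), and likewise C̃_{X,r}(G) = C̃_{X,r}(G ∖ E) when ‖·‖_X is an r-norm. -/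
/-!
The inequality `C(G \ E) ≤ C(G)` is monotonicity. Conversely, let `u ≥ 1` on `G \ E` have upper
gradient `g`. Raise `u` to at least `1` on all of `G` (`liftOn`) and set `g = ∞` on a measurable
null set `N ⊇ E` (`blowUp`). Both changes happen on null sets, so no quasi-norm is affected.

The new function has the new upper gradient (`isUpperGradient_liftOn`): a curve with finite
integral of the new `g` spends almost no time in `N`. If it starts in the open set `G`, it therefore
visits points of `G \ E`, where `u ≥ 1`, at arbitrarily small times; since the integral of `g`
over short initial pieces tends to zero, `u ≥ 1` already at the starting point
(`one_le_of_curveLint_ne_top`). By reversal the same holds at the other endpoint, so at the two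
endpoints the new function agrees with `u`.
-/

open MeasureTheory Filter Set Topology Metric ENNReal

noncomputable section

variable {P : Type*}

variable [MetricSpace P] [MeasurableSpace P] {μ : MeasureTheory.Measure P}

/-- The Sobolev capacity `C̃_{X,r}`. -/
def QBFL.capR (X : QBFL P μ) (r : ℝ) (E : Set P) : ℝ≥0∞ :=
  ⨅ q ∈ {q : (P → EReal) × (P → ℝ≥0∞) |
      Measurable q.1 ∧ (∀ x ∈ E, 1 ≤ q.1 x) ∧ IsUpperGradient q.1 q.2},
    (X.nrm q.1 ^ r + X.nrmE q.2 ^ r) ^ (1 / r)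

/-- `‖·‖_X` is an `r`-norm. -/
def QBFL.IsRNorm (X : QBFL P μ) (r : ℝ) : Prop :=
  ∀ u v : P → EReal, X.nrm (fun x => u x + v x) ^ r ≤ X.nrm u ^ r + X.nrm v ^ r

/-- The restriction of a curve to the parameter interval `[0, t]`. -/
def Curve.initial {P : Type*} [PseudoMetricSpace P] (γ : Curve P) (t : ℝ) (h0 : 0 < t) (h1 : t ≤ γ.len) :
    Curve P where
  len := t
  len_pos := h0
  toFun := γ.toFun
  lip := γ.lip.mono (Icc_subset_Icc_right h1)

/-- The curve run backwards. -/
def Curve.reverse {P : Type*} [PseudoMetricSpace P] (γ : Curve P) : Curve P where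
  len := γ.len
  len_pos := γ.len_pos
  toFun := fun t => γ.toFun (γ.len - t)
  lip := by
    intro s hs t ht
    have h := γ.lip (x := γ.len - s) ⟨by linarith [hs.2], by linarith [hs.1]⟩
      (y := γ.len - t) ⟨by linarith [ht.2], by linarith [ht.1]⟩
    rwa [edist_sub_left] at h

lemma curveLint_reverse {P : Type*} [PseudoMetricSpace P] (γ : Curve P) (ρ : P → ℝ≥0∞) :
    curveLint γ.reverse ρ = curveLint γ ρ := by
  have h := (Measure.measurePreserving_sub_left (volume : Measure ℝ) γ.len
    ).setLIntegral_comp_preimage_emb (MeasurableEquiv.subLeft γ.len).measurableEmbedding (fun t => ρ (γ.toFun t)) (Icc 0 γ.len)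
  have hpre : (fun t => γ.len - t) ⁻¹' Icc 0 γ.len = Icc 0 γ.len := by
    ext t
    simp only [mem_preimage, mem_Icc]
    constructor <;> rintro ⟨h1, h2⟩ <;> constructor <;> linarith
  rw [hpre] at h
  exact h

open Classical in
/-- The function `u`, raised to at least `1` on `G`. -/
def liftOn {P : Type*} (G : Set P) (u : P → EReal) : P → EReal :=
  fun x => if x ∈ G then max (u x) 1 else u x

open Classical in
/-- The function `g`, set to `∞` on `N`. -/
def blowUp {P : Type*} (N : Set P) (g : P → ℝ≥0∞) : P → ℝ≥0∞ :=
  fun x => if x ∈ N then ⊤ else g x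

lemma le_blowUp {P : Type*} (N : Set P) (g : P → ℝ≥0∞) (x : P) : g x ≤ blowUp N g x := by
  unfold blowUp
  split_ifs
  · exact le_top
  · exact le_rfl

lemma one_le_of_curveLint_ne_top {P : Type*} [MetricSpace P] [MeasurableSpace P] [BorelSpace P]
    {G N : Set P} (hG : IsOpen G) {u : P → EReal} {g : P → ℝ≥0∞} (hN : MeasurableSet N)
    (hug : IsUpperGradient u g) (hu : ∀ x ∈ G \ N, 1 ≤ u x) (γ : Curve P)
    (hfin : curveLint γ (blowUp N g) ≠ ⊤) (h0 : γ.toFun 0 ∈ G) : 1 ≤ u (γ.toFun 0) := by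
  have hgm : Measurable (blowUp N g) := Measurable.ite hN measurable_const hug.1
  have hcont : ContinuousOn γ.toFun (Icc 0 γ.len) := γ.lip.continuousOn
  have hae : ∀ᵐ t ∂(volume.restrict (Icc (0 : ℝ) γ.len)), blowUp N g (γ.toFun t) < ⊤ :=
    ae_lt_top' (hgm.comp_aemeasurable (hcont.aemeasurable measurableSet_Icc)) hfin
  have h0mem : (0 : ℝ) ∈ Icc 0 γ.len := ⟨le_rfl, γ.len_pos.le⟩
  have hnear : ∀ᶠ t in 𝓝[Icc 0 γ.len] (0 : ℝ), γ.toFun t ∈ G :=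
    (hcont 0 h0mem).eventually (hG.mem_nhds h0)
  obtain ⟨δ₁, hδ₁, hδG⟩ := Metric.mem_nhdsWithin_iff.1 hnear
  have hgood : ∀ δ : ℝ, 0 < δ → ∃ t, 0 < t ∧ t ≤ γ.len ∧ t < δ ∧ 1 ≤ u (γ.toFun t) := by
    intro δ hδ
    set m := min γ.len (min δ δ₁) with hm
    have hmpos : 0 < m := lt_min γ.len_pos (lt_min hδ hδ₁)
    have hsub : Ioo 0 m ⊆ Icc (0 : ℝ) γ.len := fun t ht =>
      ⟨ht.1.le, ht.2.le.trans (min_le_left _ _)⟩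
    have : NeBot (ae (volume.restrict (Ioo (0 : ℝ) m))) := by
      rw [ae_neBot, Ne, Measure.restrict_eq_zero]
      simp [hmpos]
    have hae' : ∀ᵐ t ∂(volume.restrict (Ioo (0 : ℝ) m)), blowUp N g (γ.toFun t) < ⊤ :=
      ae_restrict_of_ae_restrict_of_subset hsub hae
    obtain ⟨t, ht, htm⟩ := (hae'.and (ae_restrict_mem measurableSet_Ioo)).exists
    have htδ : t < min δ δ₁ := htm.2.trans_le (min_le_right _ _)
    refine ⟨t, htm.1, (hsub htm).2, htδ.trans_le (min_le_left _ _), hu _ ⟨?_, ?_⟩⟩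
    · refine hδG ⟨?_, hsub htm⟩
      rw [Metric.mem_ball, Real.dist_eq, sub_zero, abs_of_pos htm.1]
      exact htδ.trans_le (min_le_right _ _)
    · intro hmem
      simp [blowUp, hmem] at ht
  by_contra hlt
  have hint : ∀ t, 0 < t → t ≤ γ.len → (u (γ.toFun 0) - u (γ.toFun t)).abs ≤
      ∫⁻ s in Icc (0 : ℝ) t, blowUp N g (γ.toFun s) := fun t ht htl =>
    (hug.2 (γ.initial t ht htl)).trans (lintegral_mono fun s => le_blowUp N g _)
  have hfint : ∀ t, t ≤ γ.len → ∫⁻ s in Icc (0 : ℝ) t, blowUp N g (γ.toFun s) ≠ ⊤ := fun t htl =>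
    ne_top_of_le_ne_top hfin (lintegral_mono_set (Icc_subset_Icc_right htl))
  generalize ha : u (γ.toFun 0) = a at *
  induction a with
  | bot =>
    refine hfint γ.len le_rfl (top_le_iff.1 ?_)
    simpa using hint γ.len γ.len_pos le_rfl
  | top => exact hlt le_top
  | coe a =>
    have ha1 : a < 1 := by exact_mod_cast not_le.1 hlt
    obtain ⟨δ, hδ, hδs⟩ := exists_pos_setLIntegral_lt_of_measure_lt
      (μ := volume.restrict (Icc (0 : ℝ) γ.len)) (f := fun t => blowUp N g (γ.toFun t)) hfin
      (ε := ENNReal.ofReal (1 - a)) (by simp [ha1])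
    obtain ⟨δ', hδ'0, hδ'⟩ : ∃ δ' : ℝ, 0 < δ' ∧ ENNReal.ofReal δ' ≤ δ := by
      rcases eq_or_ne δ ⊤ with rfl | hδt
      · exact ⟨1, one_pos, le_top⟩
      · exact ⟨δ.toReal, ENNReal.toReal_pos hδ.ne' hδt, ENNReal.ofReal_toReal_le⟩
    obtain ⟨t, ht0, htl, htδ, htu⟩ := hgood δ' hδ'0
    have hsmall := hδs (Icc 0 t) (by
      refine (Measure.restrict_apply_le _ _).trans_lt ?_
      rw [Real.volume_Icc, sub_zero]
      exact ((ENNReal.ofReal_lt_ofReal_iff hδ'0).2 htδ).trans_le hδ')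
    rw [Measure.restrict_restrict_of_subset (Icc_subset_Icc_right htl)] at hsmall
    have hle := hint t ht0 htl
    generalize u (γ.toFun t) = b at *
    induction b with
    | bot => exact absurd (le_bot_iff.1 htu) (EReal.coe_ne_bot 1)
    | top =>
      refine hfint t htl (top_le_iff.1 ?_)
      simpa using hle
    | coe b =>
      have hb1 : 1 ≤ b := by exact_mod_cast htu
      refine absurd (hle.trans_lt hsmall) (not_lt.2 ?_)
      rw [← EReal.coe_sub, EReal.abs_def]
      refine ENNReal.ofReal_le_ofReal ?_
      rw [abs_sub_comm]
      exact (by linarith : 1 - a ≤ b - a).trans (le_abs_self _)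

lemma isUpperGradient_liftOn {P : Type*} [MetricSpace P] [MeasurableSpace P] [BorelSpace P]
    {G N : Set P} (hG : IsOpen G) {u : P → EReal} {g : P → ℝ≥0∞} (hN : MeasurableSet N)
    (hug : IsUpperGradient u g) (hu : ∀ x ∈ G \ N, 1 ≤ u x) :
    IsUpperGradient (liftOn G u) (blowUp N g) := by
  refine ⟨Measurable.ite hN measurable_const hug.1, fun γ => ?_⟩
  by_cases hfin : curveLint γ (blowUp N g) = ⊤
  · rw [hfin]
    exact le_top
  have e0 : liftOn G u (γ.toFun 0) = u (γ.toFun 0) := by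
    unfold liftOn
    split_ifs with h
    · exact max_eq_left (one_le_of_curveLint_ne_top hG hN hug hu γ hfin h)
    · rfl
  have e1 : liftOn G u (γ.toFun γ.len) = u (γ.toFun γ.len) := by
    unfold liftOn
    split_ifs with h
    · have hz : γ.reverse.toFun 0 = γ.toFun γ.len := by simp [Curve.reverse]
      have := one_le_of_curveLint_ne_top hG hN hug hu γ.reverse
        (by rwa [curveLint_reverse]) (by rwa [hz])
      rw [hz] at this
      exact max_eq_left this
    · rfl
  rw [e0, e1]
  exact (hug.2 γ).trans (lintegral_mono fun s => le_blowUp N g _)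

lemma measurable_liftOn {P : Type*} [MetricSpace P] [MeasurableSpace P] [BorelSpace P]
    {G : Set P} (hG : IsOpen G) {u : P → EReal} (hu : Measurable u) : Measurable (liftOn G u) :=
  Measurable.ite hG.measurableSet (hu.max measurable_const) hu

lemma one_le_liftOn {P : Type*} {G : Set P} (u : P → EReal) : ∀ x ∈ G, 1 ≤ liftOn G u x := by
  intro x hx
  simp [liftOn, hx]

lemma nrm_liftOn_le {P : Type*} [MeasurableSpace P] {μ : Measure P} (X : QBFL P μ)
    {G E : Set P} (hE : μ E = 0) {u : P → EReal} (hu : ∀ x ∈ G \ E, 1 ≤ u x) :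
    X.nrm (liftOn G u) ≤ X.nrm u := by
  refine X.nrm_mono _ _ ?_
  filter_upwards [measure_eq_zero_iff_ae_notMem.1 hE] with x hx
  unfold liftOn
  split_ifs with h
  · rw [max_eq_left (hu x ⟨h, hx⟩)]
  · exact le_rfl

lemma nrmE_blowUp_le {P : Type*} [MetricSpace P] [MeasurableSpace P] {μ : Measure P}
    (X : QBFL P μ) {N : Set P} (hN : μ N = 0) (g : P → ℝ≥0∞) :
    X.nrmE (blowUp N g) ≤ X.nrmE g := by
  refine X.nrm_mono _ _ ?_
  filter_upwards [measure_eq_zero_iff_ae_notMem.1 hN] with x hx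
  simp [blowUp, hx]

/-- Removing a set of measure zero from an open set does not change its
Sobolev capacity. -/
theorem cap_open_diff_null
    {P : Type*} [MetricSpace P] [MeasurableSpace P] [BorelSpace P]
    (μ : MeasureTheory.Measure P) [SigmaFinite μ]
    (hball : ∀ (x : P) (r : ℝ), 0 < r → 0 < μ (Metric.ball x r) ∧ μ (Metric.ball x r) < ⊤)
    (X : QBFL P μ) (G E : Set P) (hG : IsOpen G) (hE : μ E = 0) :
    X.cap G = X.cap (G \ E) ∧
      ∀ r : ℝ, 0 < r → r ≤ 1 → X.IsRNorm r → X.capR r G = X.capR r (G \ E) := by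
  have hNnull : μ (toMeasurable μ E) = 0 := by rwa [measure_toMeasurable]
  have hNmeas : MeasurableSet (toMeasurable μ E) := measurableSet_toMeasurable μ E
  have hsub : G \ toMeasurable μ E ⊆ G \ E := sdiff_subset_sdiff_right (subset_toMeasurable μ E)
  refine ⟨le_antisymm ?_ ?_, fun r hr _ _ => le_antisymm ?_ ?_⟩
  · refine le_iInf₂ fun u hu => ?_
    obtain ⟨⟨hum, hufin⟩, hu1⟩ := hu
    have hle : X.newt (liftOn G u) ≤ X.newt u := by
      refine add_le_add (nrm_liftOn_le X hE hu1) (le_iInf₂ fun g hg => ?_)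
      exact (iInf₂_le (blowUp (toMeasurable μ E) g)
        (isUpperGradient_liftOn hG hNmeas hg fun x hx => hu1 x (hsub hx))).trans
        (nrmE_blowUp_le X hNnull g)
    exact (iInf₂_le (liftOn G u)
      ⟨⟨measurable_liftOn hG hum, hle.trans_lt hufin⟩, one_le_liftOn u⟩).trans hle
  · exact le_iInf₂ fun u hu => iInf₂_le u ⟨hu.1, fun x hx => hu.2 x hx.1⟩
  · refine le_iInf₂ fun q hq => ?_
    obtain ⟨hum, hu1, hg⟩ := hq
    refine (iInf₂_le (liftOn G q.1, blowUp (toMeasurable μ E) q.2)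
      ⟨measurable_liftOn hG hum, one_le_liftOn q.1,
        isUpperGradient_liftOn hG hNmeas hg fun x hx => hu1 x (hsub hx)⟩).trans ?_
    exact ENNReal.rpow_le_rpow (add_le_add
      (ENNReal.rpow_le_rpow (nrm_liftOn_le X hE hu1) hr.le)
      (ENNReal.rpow_le_rpow (nrmE_blowUp_le X hNnull q.2) hr.le)) (by positivity)
  · exact le_iInf₂ fun q hq => iInf₂_le q ⟨hq.1, fun x hx => hq.2.1 x hx.1, hq.2.2⟩

end
end

section
/- Suppose that P = ⋃_{k=1}^∞ P_k, where each P_k is open, and that for every k ∈ ℕ there is δ_k > 0 such that C_X({x}) ≥ δ_k for each x ∈ P_k. Then every weakly quasi-continuous function on P is (everywhere finite and) continuous. In particular, if all functions in N¹X are weakly quasi-continuous, then N¹X ⊆ C(P). -/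
/-!
A singleton inside a set `E` has capacity at most that of `E`. Hence a set of capacity smaller
than `δ k` contains no point of `Pk k`, so applying weak quasi-continuity with `ε = δ k` shows that
`u` is finite and continuous on the whole open set `Pk k`. These sets cover the space.
-/

open MeasureTheory Filter Set Topology Metric ENNReal

noncomputable section

variable {P : Type*}

variable [MetricSpace P] [MeasurableSpace P] {μ : MeasureTheory.Measure P}

/-- `u` is weakly quasi-continuous: for every `ε > 0` there is a set `E` of capacity
less than `ε` such that the restriction of `u` to the complement of `E` is finite
and continuous. -/
def QBFL.WeaklyQC (X : QBFL P μ) (u : P → EReal) : Prop :=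
  ∀ ε : ℝ≥0∞, 0 < ε → ∃ E : Set P, X.cap E < ε ∧
    (∀ x ∈ Eᶜ, u x ≠ ⊤ ∧ u x ≠ ⊥) ∧ ContinuousOn u Eᶜ

/-- `u` is quasi-continuous: the exceptional set can moreover be chosen open. -/
def QBFL.QC (X : QBFL P μ) (u : P → EReal) : Prop :=
  ∀ ε : ℝ≥0∞, 0 < ε → ∃ E : Set P, IsOpen E ∧ X.cap E < ε ∧
    (∀ x ∈ Eᶜ, u x ≠ ⊤ ∧ u x ≠ ⊥) ∧ ContinuousOn u Eᶜ

/-- Monotonicity holds because every competitor for `F` is a competitor for `E`. -/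
theorem QBFL.cap_mono (X : QBFL P μ) {E F : Set P} (h : E ⊆ F) : X.cap E ≤ X.cap F :=
  biInf_mono fun _ hu => ⟨hu.1, fun x hx => hu.2 x (h hx)⟩

/-- If `P` is covered by countably many open sets on each of which the
capacity of singletons is bounded below by a positive constant, then weakly quasi-continuous
functions are (finite and) continuous; in particular if all functions in `N¹X` are weakly
quasi-continuous, then `N¹X ⊆ C(P)`. -/
theorem wqc_continuous_of_singleton_cap
    {P : Type*} [MetricSpace P] [MeasurableSpace P] [BorelSpace P]
    (μ : MeasureTheory.Measure P) [SigmaFinite μ]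
    (hball : ∀ (x : P) (r : ℝ), 0 < r → 0 < μ (Metric.ball x r) ∧ μ (Metric.ball x r) < ⊤)
    (X : QBFL P μ)
    (Pk : ℕ → Set P) (hPkopen : ∀ k, IsOpen (Pk k)) (hcover : (⋃ k, Pk k) = Set.univ)
    (δ : ℕ → ℝ≥0∞) (hδ : ∀ k, 0 < δ k)
    (hcap : ∀ k, ∀ x ∈ Pk k, δ k ≤ X.cap {x}) :
    (∀ u : P → EReal, X.WeaklyQC u → (∀ x, u x ≠ ⊤ ∧ u x ≠ ⊥) ∧ Continuous u) ∧
      ((∀ u : P → EReal, X.memN1 u → X.WeaklyQC u) →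
        ∀ u : P → EReal, X.memN1 u → Continuous u) := by
  have main : ∀ u : P → EReal, X.WeaklyQC u → (∀ x, u x ≠ ⊤ ∧ u x ≠ ⊥) ∧ Continuous u := by
    intro u hu
    have local_prop : ∀ x, (u x ≠ ⊤ ∧ u x ≠ ⊥) ∧ ContinuousAt u x := by
      intro x
      obtain ⟨k, hk⟩ := mem_iUnion.1 (hcover ▸ mem_univ x : x ∈ ⋃ k, Pk k)
      obtain ⟨E, hE, hfin, hcont⟩ := hu (δ k) (hδ k)
      have hsub : Pk k ⊆ Eᶜ := fun y hy hyE =>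
        absurd ((hcap k y hy).trans (X.cap_mono (singleton_subset_iff.2 hyE))) hE.not_ge
      exact ⟨hfin x (hsub hk), (hcont.mono hsub).continuousAt ((hPkopen k).mem_nhds hk)⟩
    exact ⟨fun x => (local_prop x).1, continuous_iff_continuousAt.2 fun x => (local_prop x).2⟩
  exact ⟨main, fun h u hu => (main u (h u hu)).2⟩

end
end

section
/- Assume that ‖·‖_X is an r-norm for some r ∈ (0,1] and that all functions in N¹X are quasi-continuous. Then C̃_{X,r} is an outer capacity: for every E ⊆ P, C̃_{X,r}(E) = inf{C̃_{X,r}(G) : G open, G ⊇ E}. In particular, if the modulus of concavity c equals 1 (so that ‖·‖_X is a norm), then C_X is an outer capacity. -/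
/-!
Given an almost optimal pair `(u, g)` for `E`, the function `u` lies in `N¹X`, hence is
quasi-continuous: there is an open `V` of small capacity such that `u` is continuous off `V`.
Thus `G = {u > 1 - δ} ∪ V` is open and contains `E`. If `v` is a competitor for `V` of small
Newtonian norm, with upper gradient `h`, then `max (u / (1 - δ)) v` is a competitor for `G` with
upper gradient `g / (1 - δ) + h`, and the `r`-norm inequality shows that its energy exceeds that
of `(u, g)` by an amount that vanishes as `δ → 0`. Using the maximum instead of the sum makes
truncation of `u` and `v` to nonnegative functions unnecessary.

If the modulus of concavity is `1`, then `‖·‖_X` is a `1`-norm and `C_X = C̃_{X,1}`, so the second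
claim is the case `r = 1` of the first.
-/


open MeasureTheory Filter Set Topology Metric ENNReal

noncomputable section

variable {P : Type*}

variable [MetricSpace P] [MeasurableSpace P] {μ : MeasureTheory.Measure P}

/-- The convention `|(±∞) - (±∞)| = ∞` is what keeps this valid for infinite arguments. -/
lemma abs_max_sub_max_le (a b c d : EReal) :
    (max a b - max c d).abs ≤ (a - c).abs + (b - d).abs := by
  have key : ∀ x y : EReal, x = ⊤ ∨ x = ⊥ ∨ y = ⊤ ∨ y = ⊥ → (x - y).abs = ⊤ := by
    intro x y h
    induction x <;> induction y <;> simp_all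
  by_cases hac : a = ⊤ ∨ a = ⊥ ∨ c = ⊤ ∨ c = ⊥
  · simp [key a c hac]
  by_cases hbd : b = ⊤ ∨ b = ⊥ ∨ d = ⊤ ∨ d = ⊥
  · simp [key b d hbd]
  push Not at hac hbd
  lift a to ℝ using ⟨hac.1, hac.2.1⟩
  lift c to ℝ using ⟨hac.2.2.1, hac.2.2.2⟩
  lift b to ℝ using ⟨hbd.1, hbd.2.1⟩
  lift d to ℝ using ⟨hbd.2.2.1, hbd.2.2.2⟩
  rw [← EReal.coe_strictMono.monotone.map_max, ← EReal.coe_strictMono.monotone.map_max,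
    ← EReal.coe_sub, ← EReal.coe_sub, ← EReal.coe_sub,
    EReal.abs_def, EReal.abs_def, EReal.abs_def,
    ← ENNReal.ofReal_add (abs_nonneg _) (abs_nonneg _)]
  apply ENNReal.ofReal_le_ofReal
  have h := abs_max_sub_max_le_max a b c d
  exact h.trans (max_le (by linarith [abs_nonneg (b - d)]) (by linarith [abs_nonneg (a - c)]))

lemma abs_max_le_add (a b : EReal) : (max a b).abs ≤ a.abs + b.abs := by
  rcases max_choice a b with h | h <;> rw [h]
  · exact le_self_add
  · exact le_add_self

lemma IsUpperGradient.max {u v : P → EReal} {g h : P → ℝ≥0∞}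
    (hu : IsUpperGradient u g) (hv : IsUpperGradient v h) :
    IsUpperGradient (fun x => max (u x) (v x)) (fun x => g x + h x) := by
  refine ⟨hu.1.add hv.1, fun γ => ?_⟩
  exact (abs_max_sub_max_le _ _ _ _).trans
    ((add_le_add (hu.2 γ) (hv.2 γ)).trans (le_lintegral_add _ _))

lemma IsUpperGradient.const_mul {u : P → EReal} {g : P → ℝ≥0∞} (hu : IsUpperGradient u g)
    {a : ℝ} (ha : 0 < a) :
    IsUpperGradient (fun x => (a : EReal) * u x) (fun x => ENNReal.ofReal a * g x) := by
  refine ⟨hu.1.const_mul _, fun γ => ?_⟩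
  have h : ∀ x y : EReal, (a : EReal) * x - a * y = a * (x - y) := by
    intro x y
    rw [sub_eq_add_neg, sub_eq_add_neg,
      EReal.left_distrib_of_nonneg_of_ne_top (by exact_mod_cast ha.le) (EReal.coe_ne_top a),
      mul_neg]
  rw [h, EReal.abs_mul, EReal.abs_def, abs_of_pos ha]
  exact (mul_le_mul_right (hu.2 γ) _).trans (lintegral_const_mul_le _ _)

lemma abs_coe_ennreal_self (x : ℝ≥0∞) : (x : EReal).abs = x := by
  induction x with
  | top => rfl
  | coe x =>
    rw [EReal.coe_nnreal_eq_coe_real, EReal.abs_def, abs_of_nonneg x.coe_nonneg,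
      ENNReal.ofReal_coe_nnreal]

lemma QBFL.nrm_max_rpow_le (X : QBFL P μ) {r : ℝ} (hr0 : 0 < r) (hrn : X.IsRNorm r)
    (u v : P → EReal) :
    X.nrm (fun x => max (u x) (v x)) ^ r ≤ X.nrm u ^ r + X.nrm v ^ r := by
  have h1 : X.nrm (fun x => max (u x) (v x)) ≤
      X.nrm (fun x => ((u x).abs : EReal) + ((v x).abs : EReal)) := by
    refine X.nrm_mono _ _ (ae_of_all _ fun x => ?_)
    rw [← EReal.coe_ennreal_add, abs_coe_ennreal_self]
    exact abs_max_le_add _ _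
  have h2 : ∀ w : P → EReal, X.nrm (fun x => ((w x).abs : EReal)) ≤ X.nrm w := fun w =>
    X.nrm_mono _ _ (ae_of_all _ fun x => by rw [abs_coe_ennreal_self])
  calc _ ≤ _ := ENNReal.rpow_le_rpow h1 hr0.le
    _ ≤ _ := hrn _ _
    _ ≤ _ := add_le_add (ENNReal.rpow_le_rpow (h2 u) hr0.le) (ENNReal.rpow_le_rpow (h2 v) hr0.le)

lemma QBFL.nrmE_add_rpow_le (X : QBFL P μ) {r : ℝ} (hrn : X.IsRNorm r)
    (g h : P → ℝ≥0∞) :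
    X.nrmE (fun x => g x + h x) ^ r ≤ X.nrmE g ^ r + X.nrmE h ^ r := by
  simpa [QBFL.nrmE, EReal.coe_ennreal_add] using hrn (fun x => (g x : EReal)) (fun x => (h x : EReal))

lemma QBFL.nrmE_const_mul_s10 (X : QBFL P μ) {a : ℝ} (ha : 0 < a) (g : P → ℝ≥0∞) :
    X.nrmE (fun x => ENNReal.ofReal a * g x) = ENNReal.ofReal a * X.nrmE g := by
  have h := X.nrm_smul a (fun x => (g x : EReal))
  rw [abs_of_pos ha] at h
  rw [QBFL.nrmE, QBFL.nrmE, ← h]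
  congr 1
  funext x
  rw [EReal.coe_ennreal_mul, EReal.coe_ennreal_ofReal, max_eq_left ha.le]

lemma QBFL.capR_mono (X : QBFL P μ) (r : ℝ) {E F : Set P} (h : E ⊆ F) :
    X.capR r E ≤ X.capR r F :=
  biInf_mono fun _ hq => ⟨hq.1, fun x hx => hq.2.1 x (h hx), hq.2.2⟩

lemma QBFL.capR_le (X : QBFL P μ) {r : ℝ} {E : Set P} {u : P → EReal} {g : P → ℝ≥0∞}
    (hm : Measurable u) (hE : ∀ x ∈ E, 1 ≤ u x) (hg : IsUpperGradient u g) :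
    X.capR r E ≤ (X.nrm u ^ r + X.nrmE g ^ r) ^ (1 / r) :=
  iInf₂_le (u, g) ⟨hm, hE, hg⟩

lemma QBFL.newt_le (X : QBFL P μ) {u : P → EReal} {g : P → ℝ≥0∞} (h : IsUpperGradient u g) :
    X.newt u ≤ X.nrm u + X.nrmE g :=
  add_le_add le_rfl (iInf₂_le g h)

lemma QBFL.exists_of_newt_lt (X : QBFL P μ) {u : P → EReal} {s : ℝ≥0∞} (h : X.newt u < s) :
    ∃ g, IsUpperGradient u g ∧ X.nrm u + X.nrmE g < s := by
  rw [QBFL.newt, ENNReal.add_iInf] at h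
  obtain ⟨g, hg⟩ := iInf_lt_iff.1 h
  by_cases hug : IsUpperGradient u g
  · refine ⟨g, hug, ?_⟩
    simpa [hug] using hg
  · simp [hug] at hg

lemma QBFL.cap_eq_capR_one (X : QBFL P μ) (E : Set P) : X.cap E = X.capR 1 E := by
  apply le_antisymm
  · refine le_iInf₂ fun q hq => ?_
    obtain ⟨hm, hE, hg⟩ := hq
    simp only [ENNReal.rpow_one, div_one]
    rcases eq_top_or_lt_top (X.nrm q.1 + X.nrmE q.2) with ht | ht
    · simp [ht]
    · exact (iInf₂_le q.1 ⟨⟨hm, (X.newt_le hg).trans_lt ht⟩, hE⟩).trans (X.newt_le hg)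
  · refine le_iInf₂ fun u hu => le_of_forall_gt fun s hs => ?_
    obtain ⟨g, hg, hlt⟩ := X.exists_of_newt_lt hs
    refine (iInf₂_le (u, g) ⟨hu.1.1, hu.2, hg⟩).trans_lt ?_
    simpa using hlt

lemma QBFL.exists_of_capR_lt (X : QBFL P μ) {r : ℝ} {E : Set P} {s : ℝ≥0∞}
    (h : X.capR r E < s) :
    ∃ u g, Measurable u ∧ (∀ x ∈ E, 1 ≤ u x) ∧ IsUpperGradient u g ∧
      (X.nrm u ^ r + X.nrmE g ^ r) ^ (1 / r) < s := by
  obtain ⟨⟨u, g⟩, h⟩ := iInf_lt_iff.1 h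
  obtain ⟨⟨h1, h2, h3⟩, h⟩ := iInf_lt_iff.1 h
  exact ⟨u, g, h1, h2, h3, h⟩

/-- The energy bound `(1 - δ)⁻ʳ A + 2 δʳ` tends to `A` as `δ → 0+`. -/
lemma exists_delta {r : ℝ} (hr0 : 0 < r) {A B : ℝ≥0∞} (h : A < B) :
    ∃ δ : ℝ, 0 < δ ∧ δ < 1 ∧
      ENNReal.ofReal (1 - δ)⁻¹ ^ r * A + (ENNReal.ofReal δ ^ r + ENNReal.ofReal δ ^ r) < B := by
  have h1 : Tendsto (fun δ : ℝ => ENNReal.ofReal (1 - δ)⁻¹ ^ r) (𝓝 0) (𝓝 1) := by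
    have h : ContinuousAt (fun δ : ℝ => (1 - δ)⁻¹) 0 :=
      (continuousAt_const.sub continuousAt_id).inv₀ (by simp)
    have := ((ENNReal.continuous_rpow_const (y := r)).comp
      ENNReal.continuous_ofReal).continuousAt.tendsto.comp h.tendsto
    simpa [Function.comp_def] using this
  have h2 : Tendsto (fun δ : ℝ => ENNReal.ofReal δ ^ r) (𝓝 0) (𝓝 0) := by
    have := ((ENNReal.continuous_rpow_const (y := r)).comp
      ENNReal.continuous_ofReal).tendsto 0
    simpa [Function.comp_def, hr0] using this
  have h3 := (ENNReal.Tendsto.mul_const (b := A) h1 (Or.inl one_ne_zero)).add (h2.add h2)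
  rw [one_mul, add_zero, add_zero] at h3
  have h4 := (h3.mono_left nhdsWithin_le_nhds).eventually_lt_const (u := B) h
    (l := 𝓝[>] (0 : ℝ))
  obtain ⟨δ, hδ, hδ'⟩ := (h4.and (Ioo_mem_nhdsGT (zero_lt_one' ℝ))).exists
  exact ⟨δ, hδ'.1, hδ'.2, hδ⟩

lemma QBFL.capR_outer (X : QBFL P μ) {r : ℝ} (hr0 : 0 < r) (hrn : X.IsRNorm r)
    (hqc : ∀ u : P → EReal, X.memN1 u → X.QC u) (E : Set P) :
    X.capR r E = ⨅ G ∈ {G : Set P | IsOpen G ∧ E ⊆ G}, X.capR r G := by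
  apply le_antisymm
  · exact le_iInf₂ fun G hG => X.capR_mono r hG.2
  refine le_of_forall_gt fun s hs => ?_
  obtain ⟨u, g, hum, huE, hug, hlt⟩ := X.exists_of_capR_lt hs
  rw [one_div, ENNReal.rpow_inv_lt_iff hr0] at hlt
  obtain ⟨δ, hδ0, hδ1, hδ⟩ := exists_delta hr0 hlt
  have hfin : X.nrm u ^ r < ⊤ ∧ X.nrmE g ^ r < ⊤ := ENNReal.add_lt_top.1 (hlt.trans_le le_top)
  rw [ENNReal.rpow_lt_top_iff_of_pos hr0, ENNReal.rpow_lt_top_iff_of_pos hr0] at hfin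
  have huN : X.memN1 u := ⟨hum, (X.newt_le hug).trans_lt (ENNReal.add_lt_top.2 hfin)⟩
  obtain ⟨V, hVo, hVc, -, hVcont⟩ := hqc u huN (ENNReal.ofReal δ) (ENNReal.ofReal_pos.2 hδ0)
  rw [X.cap_eq_capR_one] at hVc
  obtain ⟨v, h, hvm, hvV, hvh, hvlt⟩ := X.exists_of_capR_lt hVc
  simp only [ENNReal.rpow_one, div_one] at hvlt
  obtain ⟨O, hO, hOeq⟩ := continuousOn_iff'.1 hVcont (Ioi ((1 - δ : ℝ) : EReal)) isOpen_Ioi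
  have hc : 0 < 1 - δ := by linarith
  have hci : 0 < (1 - δ)⁻¹ := inv_pos.2 hc
  have hmem : ∀ x ∉ V, (x ∈ O ↔ ((1 - δ : ℝ) : EReal) < u x) := by
    intro x hx
    have := Set.ext_iff.1 hOeq x
    simpa [hx] using this.symm
  have hEG : E ⊆ O ∪ V := by
    intro x hx
    by_cases hxV : x ∈ V
    · exact Or.inr hxV
    · refine Or.inl ((hmem x hxV).2 (lt_of_lt_of_le ?_ (huE x hx)))
      exact_mod_cast (by linarith : 1 - δ < 1)
  refine (iInf₂_le (O ∪ V) ⟨hO.union hVo, hEG⟩).trans_lt ?_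
  refine (X.capR_le (u := fun x => max (((1 - δ)⁻¹ : ℝ) * u x) (v x))
    (g := fun x => ENNReal.ofReal (1 - δ)⁻¹ * g x + h x)
    ((hum.const_mul _).max hvm) ?_ ((hug.const_mul hci).max hvh)).trans_lt ?_
  · intro x hx
    by_cases hxV : x ∈ V
    · exact le_max_of_le_right (hvV x hxV)
    · refine le_max_of_le_left ?_
      have hux := (hmem x hxV).1 (hx.resolve_right hxV)
      calc (1 : EReal) = ((1 - δ)⁻¹ : ℝ) * ((1 - δ : ℝ) : EReal) := by
            rw [← EReal.coe_mul, inv_mul_cancel₀ hc.ne', EReal.coe_one]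
        _ ≤ _ := mul_le_mul_of_nonneg_left hux.le (by exact_mod_cast hci.le)
  · rw [one_div, ENNReal.rpow_inv_lt_iff hr0]
    refine lt_of_le_of_lt ?_ hδ
    have e1 := X.nrm_max_rpow_le hr0 hrn (fun x => ((1 - δ)⁻¹ : ℝ) * u x) v
    have e2 := X.nrmE_add_rpow_le hrn (fun x => ENNReal.ofReal (1 - δ)⁻¹ * g x) h
    rw [X.nrm_smul, abs_of_pos hci, ENNReal.mul_rpow_of_nonneg _ _ hr0.le] at e1
    rw [X.nrmE_const_mul_s10 hci, ENNReal.mul_rpow_of_nonneg _ _ hr0.le] at e2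
    have e3 : X.nrm v ^ r ≤ ENNReal.ofReal δ ^ r :=
      ENNReal.rpow_le_rpow (le_self_add.trans hvlt.le) hr0.le
    have e4 : X.nrmE h ^ r ≤ ENNReal.ofReal δ ^ r :=
      ENNReal.rpow_le_rpow (le_add_self.trans hvlt.le) hr0.le
    calc _ ≤ _ := add_le_add e1 e2
      _ = ENNReal.ofReal (1 - δ)⁻¹ ^ r * (X.nrm u ^ r + X.nrmE g ^ r)
          + (X.nrm v ^ r + X.nrmE h ^ r) := by ring
      _ ≤ _ := add_le_add le_rfl (add_le_add e3 e4)

/-- If all Newtonian functions are quasi-continuous, then `C̃_{X,r}` is an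
outer capacity; if moreover the modulus of concavity equals `1`, then `C_X` is an outer
capacity. -/
theorem capR_outer_of_qc
    {P : Type*} [MetricSpace P] [MeasurableSpace P] [BorelSpace P]
    (μ : MeasureTheory.Measure P) [SigmaFinite μ]
    (hball : ∀ (x : P) (r : ℝ), 0 < r → 0 < μ (Metric.ball x r) ∧ μ (Metric.ball x r) < ⊤)
    (X : QBFL P μ) (r : ℝ) (hr0 : 0 < r) (hr1 : r ≤ 1) (hrn : X.IsRNorm r)
    (hqc : ∀ u : P → EReal, X.memN1 u → X.QC u) :
    (∀ E : Set P, X.capR r E = ⨅ G ∈ {G : Set P | IsOpen G ∧ E ⊆ G}, X.capR r G) ∧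
      (X.cc = 1 → ∀ E : Set P, X.cap E = ⨅ G ∈ {G : Set P | IsOpen G ∧ E ⊆ G}, X.cap G) := by
  refine ⟨X.capR_outer hr0 hrn hqc, fun hcc E => ?_⟩
  have h1 : X.IsRNorm 1 := fun u v => by
    simpa [hcc] using X.nrm_triangle u v
  simpa only [X.cap_eq_capR_one] using X.capR_outer one_pos h1 hqc E

end
end
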